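/- arXiv:2201.03089 — 9 statements merged into one kernel-verified Lean document; each statement's English description precedes it below -/
import Mathlib

section
/- Let M be a finite monoid and let A, B ⊆ M. Then: (i) the operation K is monotone, i.e. A ⊆ B implies K(A) ⊆ K(B); (ii) there exists N ∈ ℕ such that A^m ⊆ K(A) for all m ≥ N (i.e. all sufficiently large powers of A, in particular all powers A^{idem+k} beyond the idempotent power of A, are contained in K(A)); (iii) K(A·B) = A·K(B·A)·B; (iv) K(A)·K(A) = K(A); (v) K(K(A)) = K(A). -/
open Pointwise

/-- The merge of a subset `A` of a monoid: `K(A) = ⋂_{n≥1} ⋃_{m≥n} A^m`,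
where `A^m` is the `m`-fold pointwise product. -/
def mergeSet {M : Type*} [Monoid M] (A : Set M) : Set M :=
  ⋂ (n : ℕ) (_ : 1 ≤ n), ⋃ (m : ℕ) (_ : n ≤ m), A ^ m

/-!
An element lies in `K(A)` exactly when it lies in `A ^ n` for arbitrarily large `n`. In a finite
monoid some power of `A` is contained in a later one, say `A ^ i ⊆ A ^ (i + p)` with `0 < p`.
Multiplying by powers of `A` propagates this to `A ^ n ⊆ A ^ (n + p) ⊆ A ^ (n + 2 * p) ⊆ ⋯` for all
`n ≥ i`, so these powers of `A` lie in `K(A)`. Splitting a large power as `A ^ k * A ^ l` or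
`(A * B) ^ (k + 1) = A * (B * A) ^ k * B`, with `k` and `l` still large, then gives
`K(A) ⊆ K(A) * K(A)` and `K(A * B) ⊆ A * K(B * A) * B`; the reverse inclusions only concatenate
such products. Finally, `K` fixes every idempotent set.
-/

open Filter

theorem mul_pow_succ_eq_mul_pow_mul {M : Type*} [Monoid M] (a b : M) (n : ℕ) :
    (a * b) ^ (n + 1) = a * (b * a) ^ n * b := by
  rw [pow_succ, ← mul_assoc, mul_pow_mul]

section PowLE

variable {α : Type*} [Monoid α] [Preorder α]

theorem exists_lt_pow_le_pow [Finite α] (a : α) : ∃ m n, m < n ∧ a ^ m ≤ a ^ n :=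
  Finite.to_wellQuasiOrderedLE.wqo fun n ↦ a ^ n

variable [MulRightMono α] {a : α} {i p n : ℕ}

theorem pow_le_pow_add_of_pow_le_pow_add (h : a ^ i ≤ a ^ (i + p)) (hn : i ≤ n) :
    a ^ n ≤ a ^ (n + p) := by
  obtain ⟨t, rfl⟩ := Nat.exists_eq_add_of_le hn
  rw [add_right_comm, pow_add, pow_add a (i + p)]
  exact mul_le_mul_left h _

theorem frequently_pow_le_pow_of_pow_le_pow_add (hp : 0 < p) (h : a ^ i ≤ a ^ (i + p))
    (hn : i ≤ n) : ∃ᶠ m in atTop, a ^ n ≤ a ^ m := by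
  have le_pow_add_mul (k : ℕ) : a ^ n ≤ a ^ (n + k * p) := by
    induction k with
    | zero => simp
    | succ k ih =>
      rw [Nat.succ_mul, ← add_assoc]
      exact ih.trans (pow_le_pow_add_of_pow_le_pow_add h (Nat.le_add_right_of_le hn))
  exact frequently_atTop.2 fun b ↦
    ⟨n + b * p, Nat.le_add_left_of_le (Nat.le_mul_of_pos_right b hp), le_pow_add_mul b⟩

end PowLE

section Merge

variable {M : Type*} [Monoid M] {A B : Set M} {x : M}

theorem mem_mergeSet_iff_frequently : x ∈ mergeSet A ↔ ∃ᶠ n in atTop, x ∈ A ^ n := by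
  simp only [mergeSet, Set.mem_iInter, Set.mem_iUnion, exists_prop, frequently_atTop]
  refine ⟨fun h n ↦ ?_, fun h n _ ↦ h n⟩
  obtain ⟨m, hm, hx⟩ := h (n + 1) (Nat.le_add_left 1 n)
  exact ⟨m, Nat.le_of_succ_le hm, hx⟩

theorem mergeSet_mono (h : A ⊆ B) : mergeSet A ⊆ mergeSet B := fun _ hx ↦
  mem_mergeSet_iff_frequently.2 <|
    (mem_mergeSet_iff_frequently.1 hx).mono fun _ hn ↦ Set.pow_subset_pow_left h hn

theorem eventually_pow_subset_mergeSet (hA : ∃ m n, m < n ∧ A ^ m ⊆ A ^ n) :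
    ∀ᶠ n in atTop, A ^ n ⊆ mergeSet A := by
  obtain ⟨i, j, hij, h⟩ := hA
  obtain ⟨p, hp, rfl⟩ := exists_pos_add_of_lt' hij
  filter_upwards [eventually_ge_atTop i] with n hn x hx
  exact mem_mergeSet_iff_frequently.2 <|
    (frequently_pow_le_pow_of_pow_le_pow_add hp h hn).mono fun m hm ↦ hm hx

theorem mul_mergeSet_mul_subset : A * mergeSet (B * A) * B ⊆ mergeSet (A * B) := by
  rintro _ ⟨_, ⟨a, ha, c, hc, rfl⟩, b, hb, rfl⟩
  rw [mem_mergeSet_iff_frequently] at hc ⊢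
  refine (tendsto_add_atTop_nat 1).frequently (hc.mono fun n hn ↦ ?_)
  rw [mul_pow_succ_eq_mul_pow_mul]
  exact Set.mul_mem_mul (Set.mul_mem_mul ha hn) hb

theorem mergeSet_mul (hBA : ∀ᶠ n in atTop, (B * A) ^ n ⊆ mergeSet (B * A)) :
    mergeSet (A * B) = A * mergeSet (B * A) * B := by
  refine Set.Subset.antisymm (fun x hx ↦ ?_) mul_mergeSet_mul_subset
  obtain ⟨N, hN⟩ := eventually_atTop.1 hBA
  obtain ⟨m, hm, hxm⟩ := frequently_atTop.1 (mem_mergeSet_iff_frequently.1 hx) (N + 1)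
  obtain ⟨k, rfl⟩ := Nat.exists_eq_add_of_le' (Nat.le_of_add_left_le hm)
  rw [mul_pow_succ_eq_mul_pow_mul] at hxm
  have hk : (B * A) ^ k ⊆ mergeSet (B * A) := hN k (Nat.le_of_succ_le_succ hm)
  exact Set.mul_subset_mul_right (Set.mul_subset_mul_left hk) hxm

theorem mergeSet_mul_mergeSet_subset : mergeSet A * mergeSet A ⊆ mergeSet A := by
  rintro _ ⟨x, hx, y, hy, rfl⟩
  rw [mem_mergeSet_iff_frequently] at hx hy ⊢
  obtain ⟨l, hl⟩ := hy.exists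
  refine (tendsto_add_atTop_nat l).frequently (hx.mono fun k hk ↦ ?_)
  rw [pow_add]
  exact Set.mul_mem_mul hk hl

theorem isIdempotentElem_mergeSet (hA : ∀ᶠ n in atTop, A ^ n ⊆ mergeSet A) :
    IsIdempotentElem (mergeSet A) := by
  refine Set.Subset.antisymm mergeSet_mul_mergeSet_subset fun x hx ↦ ?_
  obtain ⟨N, hN⟩ := eventually_atTop.1 hA
  obtain ⟨m, hm, hxm⟩ := frequently_atTop.1 (mem_mergeSet_iff_frequently.1 hx) (N + N)
  obtain ⟨k, rfl⟩ := Nat.exists_eq_add_of_le hm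
  rw [add_assoc, pow_add] at hxm
  exact Set.mul_subset_mul (hN N le_rfl) (hN (N + k) (Nat.le_add_right N k)) hxm

theorem mergeSet_eq_self_of_isIdempotentElem (hA : IsIdempotentElem A) : mergeSet A = A := by
  have eventually_pow_eq : ∀ᶠ n in atTop, A ^ n = A :=
    (eventually_ne_atTop 0).mono fun n hn ↦ hA.pow_eq hn
  ext x
  rw [mem_mergeSet_iff_frequently,
    frequently_congr (eventually_pow_eq.mono fun n hn ↦ Set.ext_iff.1 hn x), frequently_const]

end Merge

theorem stmt0_general {M : Type*} [Monoid M] (A B : Set M)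
    (hA : ∃ m n, m < n ∧ A ^ m ⊆ A ^ n) (hBA : ∃ m n, m < n ∧ (B * A) ^ m ⊆ (B * A) ^ n) :
    (A ⊆ B → mergeSet A ⊆ mergeSet B) ∧
    (∃ N : ℕ, ∀ m : ℕ, N ≤ m → A ^ m ⊆ mergeSet A) ∧
    mergeSet (A * B) = A * mergeSet (B * A) * B ∧
    mergeSet A * mergeSet A = mergeSet A ∧
    mergeSet (mergeSet A) = mergeSet A := by
  have pow_subset := eventually_pow_subset_mergeSet hA
  have idem := isIdempotentElem_mergeSet pow_subset
  exact ⟨mergeSet_mono, eventually_atTop.1 pow_subset,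
    mergeSet_mul (eventually_pow_subset_mergeSet hBA), idem,
    mergeSet_eq_self_of_isIdempotentElem idem⟩

theorem stmt0 {M : Type*} [Monoid M] [Fintype M] (A B : Set M) :
    (A ⊆ B → mergeSet A ⊆ mergeSet B) ∧
    (∃ N : ℕ, ∀ m : ℕ, N ≤ m → A ^ m ⊆ mergeSet A) ∧
    mergeSet (A * B) = A * mergeSet (B * A) * B ∧
    mergeSet A * mergeSet A = mergeSet A ∧
    mergeSet (mergeSet A) = mergeSet A :=
  stmt0_general A B (exists_lt_pow_le_pow A) (exists_lt_pow_le_pow (B * A))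
end

section
/- Let M be a finite ordered monoid with merge and let A ⊆ M be a nonempty subset. Then at least one of the following holds: (i) there exists a ∈ A with a·Closgp(A) ⊊ Closgp(A) (where a·S denotes {a·s : s ∈ S}); (ii) there exists a ∈ A with Closgp(A)·a ⊊ Closgp(A); (iii) Closgp(A) has a maximum, i.e. there exists m ∈ Closgp(A) such that x ≤ m for all x ∈ Closgp(A). -/
open Pointwise

/-- `closgp mrg A`: the least subset of the monoid containing `A` and closed
under multiplication and the merge operation `mrg`. -/
def closgp {M : Type*} [Monoid M] (mrg : M → M) (A : Set M) : Set M :=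
  ⋂₀ {S : Set M | A ⊆ S ∧ (∀ x ∈ S, ∀ y ∈ S, x * y ∈ S) ∧ ∀ x ∈ S, mrg x ∈ S}

/-!
Write `S` for `closgp mrg A`. If some `a ∈ A` has `a * S = S = S * a`, then `S` has a two-sided
identity `e`. For any `a ∈ A` with `S * a = S` we can write `e = s * a ^ n` with `s ∈ S`. The
conjugation law with second argument `1` reads `a * mrg a = mrg a`, so `a ^ n ≤ mrg a` yields
`e ≤ s * mrg a = e * mrg a = mrg a`, whence also `a = a * e ≤ mrg a`. The elements of `S` above `e`
are directed, since `x * y` is above `x` and `y`; so some `p ∈ S` is above every `mrg a` with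
`a ∈ A`, and then the idempotent `mrg p` is above all of `S`.
-/

section Closgp

variable {M : Type*} [Monoid M] {mrg : M → M} {A : Set M}

theorem subset_closgp : A ⊆ closgp mrg A :=
  Set.subset_sInter fun _ hS => hS.1

theorem closgp_subset {S : Set M} (hA : A ⊆ S) (hmul : ∀ x ∈ S, ∀ y ∈ S, x * y ∈ S)
    (hmrg : ∀ x ∈ S, mrg x ∈ S) : closgp mrg A ⊆ S :=
  Set.sInter_subset_of_mem ⟨hA, hmul, hmrg⟩

theorem mul_mem_closgp {x y : M} (hx : x ∈ closgp mrg A) (hy : y ∈ closgp mrg A) :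
    x * y ∈ closgp mrg A :=
  Set.mem_sInter.2 fun S hS => hS.2.1 x (hx S hS) y (hy S hS)

theorem mrg_mem_closgp {x : M} (hx : x ∈ closgp mrg A) : mrg x ∈ closgp mrg A :=
  Set.mem_sInter.2 fun S hS => hS.2.2 x (hx S hS)

theorem closgp_subset_Iic [Preorder M] [MulLeftMono M] [MulRightMono M] (hmono : Monotone mrg)
    {m : M} (hA : A ⊆ Set.Iic m) (hmul : m * m ≤ m) (hmrg : mrg m ≤ m) :
    closgp mrg A ⊆ Set.Iic m :=
  closgp_subset hA (fun _ hx _ hy => (mul_le_mul' hx hy).trans hmul)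
    fun _ hx => (hmono hx).trans hmrg

end Closgp

theorem surjOn_of_not_image_ssubset {α : Type*} {f : α → α} {S : Set α} (hf : Set.MapsTo f S S)
    (h : ¬f '' S ⊂ S) : Set.SurjOn f S S :=
  (eq_of_le_of_not_lt hf.image_subset h).ge

/-- `e` is a two-sided identity element of the subset `S`; when `S` lies in a monoid, `e` may differ
from `1`. -/
structure IsIdentityElem {M : Type*} [Mul M] (S : Set M) (e : M) : Prop where
  mem : e ∈ S
  mul_left : ∀ t ∈ S, e * t = t
  mul_right : ∀ t ∈ S, t * e = t

theorem exists_isIdentityElem {M : Type*} [Semigroup M] {S : Set M} {a : M} (ha : a ∈ S)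
    (hleft : Set.SurjOn (a * ·) S S) (hright : Set.SurjOn (· * a) S S) :
    ∃ e, IsIdentityElem S e := by
  obtain ⟨r, hr, har : a * r = a⟩ := hleft ha
  obtain ⟨l, hl, hla : l * a = a⟩ := hright ha
  have mul_r : ∀ t ∈ S, t * r = t := by
    intro t ht
    obtain ⟨s, -, rfl⟩ := hright ht
    rw [mul_assoc, har]
  have l_mul : ∀ t ∈ S, l * t = t := by
    intro t ht
    obtain ⟨s, -, rfl⟩ := hleft ht
    rw [← mul_assoc, hla]
  have hlr : l = r := (mul_r l hl).symm.trans (l_mul r hr)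
  exact ⟨r, hr, hlr ▸ l_mul, mul_r⟩

namespace IsIdentityElem

variable {M : Type*} {S : Set M} {e : M}

theorem directedOn_setOf_le [Mul M] [Preorder M] [MulLeftMono M] [MulRightMono M]
    (he : IsIdentityElem S e) (hmul : ∀ x ∈ S, ∀ y ∈ S, x * y ∈ S) :
    DirectedOn (· ≤ ·) {x ∈ S | e ≤ x} := by
  rintro x ⟨hx, hex⟩ y ⟨hy, hey⟩
  have hxy : x ≤ x * y := (he.mul_right x hx).ge.trans (mul_le_mul_right hey x)
  have hyx : y ≤ x * y := (he.mul_left y hy).ge.trans (mul_le_mul_left hex y)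
  exact ⟨x * y, ⟨hmul x hx y hy, hex.trans hxy⟩, hxy, hyx⟩

theorem le_of_pow_le [Monoid M] [Preorder M] [MulLeftMono M] (he : IsIdentityElem S e) {a b : M}
    (ha : Set.SurjOn (· * a) S S) (hb : b ∈ S) (hab : a * b = b) {n : ℕ} (hn : a ^ n ≤ b) :
    e ≤ b := by
  have hpow : a ^ n * b = b := mul_left_iterate_apply a b ▸ Function.iterate_fixed hab n
  obtain ⟨s, -, hs : s * a ^ n = e⟩ := mul_right_iterate a n ▸ ha.iterate n he.mem
  calc
    e = s * a ^ n := hs.symm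
    _ ≤ s * b := mul_le_mul_right hn s
    _ = e * b := by rw [← hs, mul_assoc, hpow]
    _ = b := he.mul_left b hb

end IsIdentityElem

section Merge

variable {M : Type*} [Monoid M] [Preorder M] [MulLeftMono M] [MulRightMono M] {mrg : M → M}
  {A : Set M}

theorem exists_isGreatest_closgp (hmono : Monotone mrg)
    (hidem : ∀ a, IsIdempotentElem (mrg a)) (hmrg : ∀ a, mrg (mrg a) = mrg a)
    (habsorb : ∀ a, a * mrg a = mrg a) (hpow : ∀ a, ∃ n : ℕ, a ^ n ≤ mrg a) (hA : A.Finite)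
    {e : M} (he : IsIdentityElem (closgp mrg A) e)
    (hright : ∀ a ∈ A, Set.SurjOn (· * a) (closgp mrg A) (closgp mrg A)) :
    ∃ m, IsGreatest (closgp mrg A) m := by
  have mrg_mem : ∀ a ∈ A, mrg a ∈ closgp mrg A := fun a ha => mrg_mem_closgp (subset_closgp ha)
  have e_le_mrg : ∀ a ∈ A, e ≤ mrg a := fun a ha =>
    he.le_of_pow_le (hright a ha) (mrg_mem a ha) (habsorb a) (hpow a).choose_spec
  have le_mrg : ∀ a ∈ A, a ≤ mrg a := fun a ha =>
    calc
      a = a * e := (he.mul_right a (subset_closgp ha)).symm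
      _ ≤ a * mrg a := mul_le_mul_right (e_le_mrg a ha) a
      _ = mrg a := habsorb a
  obtain ⟨p, hpS, hp⟩ : ∃ p ∈ closgp mrg A, ∀ a ∈ A, mrg a ≤ p := by
    have hdir := he.directedOn_setOf_le fun _ hx _ hy => mul_mem_closgp hx hy
    have : Nonempty {x ∈ closgp mrg A | e ≤ x} := ⟨e, he.mem, le_rfl⟩
    have : Finite A := hA
    obtain ⟨p, hp⟩ := hdir.directed_val.finite_le
      fun a : A => ⟨mrg a, mrg_mem a a.2, e_le_mrg a a.2⟩
    exact ⟨p, p.2.1, fun a ha => hp ⟨a, ha⟩⟩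
  have le_mrg_p : A ⊆ Set.Iic (mrg p) := fun a ha =>
    calc
      a ≤ mrg a := le_mrg a ha
      _ = mrg (mrg a) := (hmrg a).symm
      _ ≤ mrg p := hmono (hp a ha)
  exact ⟨mrg p, mrg_mem_closgp hpS, closgp_subset_Iic hmono le_mrg_p (hidem p).le (hmrg p).le⟩

theorem stmt1_general (hmono : Monotone mrg) (hidem : ∀ a, IsIdempotentElem (mrg a))
    (hmrg : ∀ a, mrg (mrg a) = mrg a) (habsorb : ∀ a, a * mrg a = mrg a)
    (hpow : ∀ a, ∃ n : ℕ, a ^ n ≤ mrg a) (hA : A.Finite) :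
    (∀ a ∈ A, (fun s => a * s) '' closgp mrg A ⊂ closgp mrg A) ∨
    (∃ a ∈ A, (fun s => s * a) '' closgp mrg A ⊂ closgp mrg A) ∨
    (∃ m ∈ closgp mrg A, ∀ x ∈ closgp mrg A, x ≤ m) := by
  by_contra! ⟨⟨a, ha, hleft⟩, hright, hmax⟩
  have surjOn_left : Set.SurjOn (a * ·) (closgp mrg A) (closgp mrg A) :=
    surjOn_of_not_image_ssubset (fun _ hs => mul_mem_closgp (subset_closgp ha) hs) hleft
  have surjOn_right : ∀ b ∈ A, Set.SurjOn (· * b) (closgp mrg A) (closgp mrg A) := fun b hb =>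
    surjOn_of_not_image_ssubset (fun _ hs => mul_mem_closgp hs (subset_closgp hb)) (hright b hb)
  obtain ⟨e, he⟩ := exists_isIdentityElem (subset_closgp ha) surjOn_left (surjOn_right a ha)
  obtain ⟨m, hm, hle⟩ := exists_isGreatest_closgp hmono hidem hmrg habsorb hpow hA he surjOn_right
  obtain ⟨x, hx, hxm⟩ := hmax m hm
  exact hxm (hle hx)

end Merge

theorem stmt1 {M : Type*} [Monoid M] [Fintype M] [PartialOrder M]
    (hmulmono : ∀ a b c d : M, a ≤ b → c ≤ d → a * c ≤ b * d)
    (mrg : M → M)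
    (hmrgmono : ∀ a b : M, a ≤ b → mrg a ≤ mrg b)
    (hmrgidem : ∀ e : M, e * e = e → mrg e = e)
    (hmrgmul : ∀ a : M, mrg a * mrg a = mrg a)
    (hmrgmrg : ∀ a : M, mrg (mrg a) = mrg a)
    (hmrgconj : ∀ a b : M, mrg (a * b) = a * mrg (b * a) * b)
    (hmrgpow : ∀ a : M, ∃ N : ℕ, ∀ m : ℕ, N ≤ m → a ^ m ≤ mrg a)
    (A : Set M) (hA : A.Nonempty) :
    (∃ a ∈ A, (fun s => a * s) '' closgp mrg A ⊂ closgp mrg A) ∨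
    (∃ a ∈ A, (fun s => s * a) '' closgp mrg A ⊂ closgp mrg A) ∨
    (∃ m ∈ closgp mrg A, ∀ x ∈ closgp mrg A, x ≤ m) := by
  have : MulLeftMono M := ⟨fun a _ _ h => hmulmono _ _ _ _ le_rfl h⟩
  have : MulRightMono M := ⟨fun a _ _ h => hmulmono _ _ _ _ h le_rfl⟩
  have habsorb (a : M) : a * mrg a = mrg a := by simpa using (hmrgconj a 1).symm
  have hpow (a : M) : ∃ n : ℕ, a ^ n ≤ mrg a := (hmrgpow a).imp fun N hN => hN N le_rfl
  exact (stmt1_general (fun _ _ => hmrgmono _ _) hmrgmul hmrgmrg habsorb hpow A.toFinite).imp_left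
    fun h => hA.imp fun a ha => ⟨ha, h a ha⟩
end

section
/- Let M be a finite ordinal monoid with merge and let A ⊆ M. Then Closgp(A) = A·Closgs(A) = Closgs(A)·A, and Closgordp(A) = A·Closgord(A), where juxtaposition of subsets denotes the pointwise product {a·b : a ∈ A, b ∈ B}. -/
open Pointwise

/-- `closgs mrg A = closgp mrg A ∪ {1}`. -/
def closgs {M : Type*} [Monoid M] (mrg : M → M) (A : Set M) : Set M :=
  closgp mrg A ∪ {1}

/-- `closgordp mrg om A`: least subset containing `A`, closed under
multiplication, `mrg` and `om`. -/
def closgordp {M : Type*} [Monoid M] (mrg om : M → M) (A : Set M) : Set M :=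
  ⋂₀ {S : Set M | A ⊆ S ∧ (∀ x ∈ S, ∀ y ∈ S, x * y ∈ S) ∧
      (∀ x ∈ S, mrg x ∈ S) ∧ ∀ x ∈ S, om x ∈ S}

/-- `closgord mrg om A`: least subset containing `A ∪ {1}`, closed under
multiplication, `mrg` and `om`. -/
def closgord {M : Type*} [Monoid M] (mrg om : M → M) (A : Set M) : Set M :=
  ⋂₀ {S : Set M | A ∪ {1} ⊆ S ∧ (∀ x ∈ S, ∀ y ∈ S, x * y ∈ S) ∧
      (∀ x ∈ S, mrg x ∈ S) ∧ ∀ x ∈ S, om x ∈ S}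

/-!
Write `S¹` for a subsemigroup `S` with the identity adjoined. If `S` contains `A`, then `A * S¹` is
a subsemigroup of `S`. It inherits stability under `mrg` from `S` because
`mrg (a * s) = a * (mrg (s * a) * s)` moves the leading factor `a` out of `mrg`, and likewise
stability under `om` because `om (a * s) = a * om (s * a)`. So if `S` is the closure of `A`, it is
contained in `A * S¹` by minimality; the equality with `S¹ * A` is dual. As `mrg` and `om` fix `1`,
adjoining `1` to the generators or to the closure gives the same set.
-/

open Set

section AdjoinOne

variable {M : Type*} [Monoid M] {S : Subsemigroup M} {A : Set M} {f : M → M}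

/-- The monoid `S¹` obtained by adjoining the identity of `M` to a subsemigroup `S` of `M`. -/
def adjoinOne (S : Subsemigroup M) : Submonoid M :=
  Submonoid.closure S

theorem coe_adjoinOne (S : Subsemigroup M) : (adjoinOne S : Set M) = ↑S ∪ {1} := by
  rw [adjoinOne, Submonoid.closure_eq_one_union, Subsemigroup.closure_eq, union_comm]

theorem subset_adjoinOne (S : Subsemigroup M) : (S : Set M) ⊆ adjoinOne S :=
  Submonoid.subset_closure

theorem mul_adjoinOne_subset (hA : A ⊆ S) : A * adjoinOne S ⊆ S := by
  rw [coe_adjoinOne, mul_union, singleton_one, mul_one]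
  exact union_subset (mul_subset_iff.2 fun _ ha _ hs => mul_mem (hA ha) hs) hA

theorem adjoinOne_mul_subset (hA : A ⊆ S) : adjoinOne S * A ⊆ S := by
  rw [coe_adjoinOne, union_mul, singleton_one, one_mul]
  exact union_subset (mul_subset_iff.2 fun _ hs _ ha => mul_mem hs (hA ha)) hA

theorem mapsTo_adjoinOne (hf : MapsTo f S S) (hf1 : f 1 = 1) :
    MapsTo f (adjoinOne S) (adjoinOne S) := by
  rw [coe_adjoinOne]
  exact hf.union_union (mapsTo_singleton.2 hf1)

theorem mapsTo_mul_adjoinOne_of_conj (hA : A ⊆ S) (hf : MapsTo f S S)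
    (hconj : ∀ a b, f (a * b) = a * f (b * a) * b) :
    MapsTo f (A * adjoinOne S) (A * adjoinOne S) := by
  rintro _ ⟨a, ha, s, hs, rfl⟩
  have hsa : f (s * a) ∈ adjoinOne S :=
    subset_adjoinOne S (hf (adjoinOne_mul_subset hA (mul_mem_mul hs ha)))
  exact ⟨a, ha, f (s * a) * s, mul_mem hsa hs, by simp only [hconj a s, mul_assoc]⟩

theorem mapsTo_adjoinOne_mul_of_conj (hA : A ⊆ S) (hf : MapsTo f S S)
    (hconj : ∀ a b, f (a * b) = a * f (b * a) * b) :
    MapsTo f (adjoinOne S * A) (adjoinOne S * A) := by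
  rintro _ ⟨s, hs, a, ha, rfl⟩
  have has : f (a * s) ∈ adjoinOne S :=
    subset_adjoinOne S (hf (mul_adjoinOne_subset hA (mul_mem_mul ha hs)))
  exact ⟨s * f (a * s), mul_mem hs has, a, ha, (hconj s a).symm⟩

theorem mapsTo_mul_adjoinOne_of_rotate (hA : A ⊆ S) (hf : MapsTo f S S)
    (hrot : ∀ a b, f (a * b) = a * f (b * a)) :
    MapsTo f (A * adjoinOne S) (A * adjoinOne S) := by
  rintro _ ⟨a, ha, s, hs, rfl⟩
  have hsa : f (s * a) ∈ adjoinOne S :=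
    subset_adjoinOne S (hf (adjoinOne_mul_subset hA (mul_mem_mul hs ha)))
  exact ⟨a, ha, f (s * a), hsa, (hrot a s).symm⟩

end AdjoinOne

section StableClosure

/-- The least subsemigroup containing `A` and stable under every operation in `F`. With `F = {mrg}`
it is `closgp mrg A`, and with `F = {mrg, om}` it is `closgordp mrg om A`. -/
def stableClosure {M : Type*} [Mul M] (F : Set (M → M)) (A : Set M) : Subsemigroup M :=
  sInf {S | A ⊆ S ∧ ∀ f ∈ F, MapsTo f S S}

section Mul

variable {M : Type*} [Mul M] {F : Set (M → M)} {A : Set M} {f : M → M}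

theorem subset_stableClosure : A ⊆ stableClosure F A :=
  fun _ ha => Subsemigroup.mem_sInf.2 fun _ hS => hS.1 ha

theorem mapsTo_stableClosure (hf : f ∈ F) : MapsTo f (stableClosure F A) (stableClosure F A) :=
  fun _ hx => Subsemigroup.mem_sInf.2 fun S hS => hS.2 f hf (Subsemigroup.mem_sInf.1 hx S hS)

theorem stableClosure_le {S : Subsemigroup M} (hA : A ⊆ S) (hF : ∀ f ∈ F, MapsTo f S S) :
    stableClosure F A ≤ S :=
  sInf_le ⟨hA, hF⟩

theorem stableClosure_mono {B : Set M} (hAB : A ⊆ B) : stableClosure F A ≤ stableClosure F B :=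
  stableClosure_le (hAB.trans subset_stableClosure) fun _ hf => mapsTo_stableClosure hf

end Mul

variable {M : Type*} [Monoid M] {F : Set (M → M)} {A : Set M} {mrg om : M → M}

theorem stableClosure_eq_mul_adjoinOne
    (hF : ∀ f ∈ F, MapsTo f (A * adjoinOne (stableClosure F A))
      (A * adjoinOne (stableClosure F A))) :
    (stableClosure F A : Set M) = A * adjoinOne (stableClosure F A) := by
  have hsub := mul_adjoinOne_subset (subset_stableClosure (F := F) (A := A))
  let R : Subsemigroup M :=
    { carrier := A * adjoinOne (stableClosure F A)
      mul_mem' := by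
        rintro _ y ⟨a, ha, s, hs, rfl⟩ hy
        exact ⟨a, ha, s * y, mul_mem hs (subset_adjoinOne _ (hsub hy)), (mul_assoc a s y).symm⟩ }
  have hR : stableClosure F A ≤ R := stableClosure_le (subset_mul_left A (one_mem _)) hF
  exact Subset.antisymm hR hsub

theorem stableClosure_eq_adjoinOne_mul
    (hF : ∀ f ∈ F, MapsTo f (adjoinOne (stableClosure F A) * A)
      (adjoinOne (stableClosure F A) * A)) :
    (stableClosure F A : Set M) = adjoinOne (stableClosure F A) * A := by
  have hsub := adjoinOne_mul_subset (subset_stableClosure (F := F) (A := A))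
  let L : Subsemigroup M :=
    { carrier := adjoinOne (stableClosure F A) * A
      mul_mem' := by
        rintro x _ hx ⟨s, hs, a, ha, rfl⟩
        exact ⟨x * s, mul_mem (subset_adjoinOne _ (hsub hx)) hs, a, ha, mul_assoc x s a⟩ }
  have hL : stableClosure F A ≤ L := stableClosure_le (subset_mul_right A (one_mem _)) hF
  exact Subset.antisymm hL hsub

theorem coe_stableClosure_union_one (hF : ∀ f ∈ F, f 1 = 1) :
    (stableClosure F (A ∪ {1}) : Set M) = adjoinOne (stableClosure F A) := by
  apply Subset.antisymm
  · have hgen : A ∪ {1} ⊆ adjoinOne (stableClosure F A) := by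
      rw [coe_adjoinOne]
      exact union_subset_union_left {1} subset_stableClosure
    exact stableClosure_le (S := (adjoinOne (stableClosure F A)).toSubsemigroup) hgen
      fun f hf => mapsTo_adjoinOne (mapsTo_stableClosure hf) (hF f hf)
  · rw [coe_adjoinOne]
    exact union_subset (stableClosure_mono subset_union_left)
      (subset_union_right.trans subset_stableClosure)

theorem closgp_eq_stableClosure : closgp mrg A = stableClosure {mrg} A := by
  apply Subset.antisymm
  · exact sInter_subset_of_mem ⟨subset_stableClosure, fun _ hx _ hy => mul_mem hx hy,
      mapsTo_stableClosure rfl⟩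
  · rintro x hx S ⟨hA, hmul, hmrg⟩
    exact stableClosure_le (S := ⟨S, fun ha hb => hmul _ ha _ hb⟩) hA
      (forall_eq.2 hmrg) hx

theorem closgs_eq_adjoinOne : closgs mrg A = adjoinOne (stableClosure {mrg} A) := by
  rw [closgs, closgp_eq_stableClosure, coe_adjoinOne]

theorem closgordp_eq_stableClosure : closgordp mrg om A = stableClosure {mrg, om} A := by
  apply Subset.antisymm
  · exact sInter_subset_of_mem ⟨subset_stableClosure, fun _ hx _ hy => mul_mem hx hy,
      mapsTo_stableClosure (mem_insert mrg {om}), mapsTo_stableClosure (mem_insert_of_mem mrg rfl)⟩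
  · rintro x hx S ⟨hA, hmul, hmrg, hom⟩
    have hF : ∀ f ∈ ({mrg, om} : Set (M → M)), MapsTo f S S := by
      rintro f (rfl | rfl)
      exacts [hmrg, hom]
    exact stableClosure_le (S := ⟨S, fun ha hb => hmul _ ha _ hb⟩) hA hF hx

theorem closgord_eq_adjoinOne (hmrg1 : mrg 1 = 1) (hom1 : om 1 = 1) :
    closgord mrg om A = adjoinOne (stableClosure {mrg, om} A) :=
  calc
    closgord mrg om A = closgordp mrg om (A ∪ {1}) := rfl
    _ = stableClosure {mrg, om} (A ∪ {1}) := closgordp_eq_stableClosure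
    _ = adjoinOne (stableClosure {mrg, om} A) :=
      coe_stableClosure_union_one (by simp [hmrg1, hom1])

theorem closgp_eq_mul_closgs (hconj : ∀ a b, mrg (a * b) = a * mrg (b * a) * b) :
    closgp mrg A = A * closgs mrg A := by
  rw [closgs_eq_adjoinOne, closgp_eq_stableClosure]
  exact stableClosure_eq_mul_adjoinOne <| forall_eq.2 <|
    mapsTo_mul_adjoinOne_of_conj subset_stableClosure (mapsTo_stableClosure rfl) hconj

theorem closgp_eq_closgs_mul (hconj : ∀ a b, mrg (a * b) = a * mrg (b * a) * b) :
    closgp mrg A = closgs mrg A * A := by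
  rw [closgs_eq_adjoinOne, closgp_eq_stableClosure]
  exact stableClosure_eq_adjoinOne_mul <| forall_eq.2 <|
    mapsTo_adjoinOne_mul_of_conj subset_stableClosure (mapsTo_stableClosure rfl) hconj

theorem closgordp_eq_mul_closgord (hmrg1 : mrg 1 = 1) (hom1 : om 1 = 1)
    (hconj : ∀ a b, mrg (a * b) = a * mrg (b * a) * b)
    (hrot : ∀ a b, om (a * b) = a * om (b * a)) :
    closgordp mrg om A = A * closgord mrg om A := by
  rw [closgord_eq_adjoinOne hmrg1 hom1, closgordp_eq_stableClosure]
  apply stableClosure_eq_mul_adjoinOne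
  rintro f (rfl | rfl)
  · exact mapsTo_mul_adjoinOne_of_conj subset_stableClosure
      (mapsTo_stableClosure (mem_insert _ _)) hconj
  · exact mapsTo_mul_adjoinOne_of_rotate subset_stableClosure
      (mapsTo_stableClosure (mem_insert_of_mem _ rfl)) hrot

end StableClosure

theorem stmt2_general {M : Type*} [Monoid M] (mrg : M → M) (hmrg1 : mrg 1 = 1)
    (hmrgconj : ∀ a b : M, mrg (a * b) = a * mrg (b * a) * b)
    (om : M → M) (hom1 : om 1 = 1)
    (hommul : ∀ x y : M, om (x * y) = x * om (y * x))
    (A : Set M) :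
    closgp mrg A = A * closgs mrg A ∧
    closgp mrg A = closgs mrg A * A ∧
    closgordp mrg om A = A * closgord mrg om A :=
  ⟨closgp_eq_mul_closgs hmrgconj, closgp_eq_closgs_mul hmrgconj,
    closgordp_eq_mul_closgord hmrg1 hom1 hmrgconj hommul⟩

theorem stmt2 {M : Type*} [Monoid M] [Fintype M] [PartialOrder M]
    (hmulmono : ∀ a b c d : M, a ≤ b → c ≤ d → a * c ≤ b * d)
    (mrg : M → M)
    (hmrgmono : ∀ a b : M, a ≤ b → mrg a ≤ mrg b)
    (hmrgidem : ∀ e : M, e * e = e → mrg e = e)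
    (hmrgmul : ∀ a : M, mrg a * mrg a = mrg a)
    (hmrgmrg : ∀ a : M, mrg (mrg a) = mrg a)
    (hmrgconj : ∀ a b : M, mrg (a * b) = a * mrg (b * a) * b)
    (hmrgpow : ∀ a : M, ∃ N : ℕ, ∀ m : ℕ, N ≤ m → a ^ m ≤ mrg a)
    (om : M → M)
    (homono : ∀ a b : M, a ≤ b → om a ≤ om b)
    (hom1 : om 1 = 1)
    (hompow : ∀ x : M, ∀ n : ℕ, 1 ≤ n → om (x ^ n) = om x)
    (hommul : ∀ x y : M, om (x * y) = x * om (y * x))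
    (A : Set M) :
    closgp mrg A = A * closgs mrg A ∧
    closgp mrg A = closgs mrg A * A ∧
    closgordp mrg om A = A * closgord mrg om A := by
  exact stmt2_general mrg (hmrgidem 1 (one_mul 1)) hmrgconj om hom1 hommul A
end

section
/- Let M be a finite ordinal monoid with merge and let A ⊆ M. Define Closgo(A) := {a·ω(b) : a, b ∈ Closgp(A)}. Then at least one of the following holds: (i) there exists a ∈ A with a·Closgordp(A) ⊊ Closgordp(A) (where a·S denotes {a·s : s ∈ S}); (ii) Closgordp(Closgo(A)) ⊊ Closgordp(A); (iii) for all x, y ∈ Closgordp(A), x·y = y and ω(x) = ω(y). -/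
open Pointwise

/-- `closgo mrg om A = {a · om(b) : a, b ∈ closgp mrg A}`. -/
def closgo {M : Type*} [Monoid M] (mrg om : M → M) (A : Set M) : Set M :=
  {z : M | ∃ a ∈ closgp mrg A, ∃ b ∈ closgp mrg A, z = a * om b}

/-!
Write `S` for the closure of `A` under multiplication, `mrg` and `om`, and suppose that (i) and (ii)
fail, so that every `a ∈ A` acts surjectively on `S` by left translation. If `x * y` acts
surjectively, so does its left factor `x`. Since `mrg x` and `om x` both have `x` as a left factor,
and since `closgo mrg om A` generates `S`, surjectivity is inherited by some element `a * om b`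
of `closgo mrg om A`. Surjective translations have finite order, hence are injective, so `om b` acts
surjectively as well. Now `b * om b = om b` makes `b` a left identity of `S`. If `c ∈ S` acts
surjectively, some power of `c` is another left identity, which forces `om c = om b`; then
`c * om b = om b` makes `c` itself a left identity. So the elements of `A` are left identities, and
multiplication, `mrg` and `om` preserve this property; and all left identities in `S` have the same
image under `om`.
-/

open Set

section Closure

variable {M : Type*} [Monoid M] {mrg om : M → M} {A : Set M} {x y : M}

theorem subset_closgordp : A ⊆ closgordp mrg om A := fun _ hx _ hS => hS.1 hx

theorem mul_mem_closgordp (hx : x ∈ closgordp mrg om A) (hy : y ∈ closgordp mrg om A) :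
    x * y ∈ closgordp mrg om A :=
  fun S hS => hS.2.1 x (hx S hS) y (hy S hS)

theorem mrg_mem_closgordp (hx : x ∈ closgordp mrg om A) : mrg x ∈ closgordp mrg om A :=
  fun S hS => hS.2.2.1 x (hx S hS)

theorem om_mem_closgordp (hx : x ∈ closgordp mrg om A) : om x ∈ closgordp mrg om A :=
  fun S hS => hS.2.2.2 x (hx S hS)

theorem mapsTo_mul_left_closgordp (hx : x ∈ closgordp mrg om A) :
    MapsTo (x * ·) (closgordp mrg om A) (closgordp mrg om A) :=
  fun _ hy => mul_mem_closgordp hx hy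

@[elab_as_elim]
theorem closgordp_induction {p : (x : M) → x ∈ closgordp mrg om A → Prop}
    (mem : ∀ x (hx : x ∈ A), p x (subset_closgordp hx))
    (mul : ∀ x y hx hy, p x hx → p y hy → p (x * y) (mul_mem_closgordp hx hy))
    (merge : ∀ x hx, p x hx → p (mrg x) (mrg_mem_closgordp hx))
    (omega : ∀ x hx, p x hx → p (om x) (om_mem_closgordp hx)) (hx : x ∈ closgordp mrg om A) :
    p x hx :=
  let ⟨_, hpx⟩ := hx {z | ∃ hz, p z hz} ⟨fun z hz => ⟨_, mem z hz⟩,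
    fun _ ⟨_, hpz⟩ _ ⟨_, hpw⟩ => ⟨_, mul _ _ _ _ hpz hpw⟩,
    fun _ ⟨_, hpz⟩ => ⟨_, merge _ _ hpz⟩, fun _ ⟨_, hpz⟩ => ⟨_, omega _ _ hpz⟩⟩
  hpx

theorem closgp_subset_closgordp : closgp mrg A ⊆ closgordp mrg om A :=
  fun _ hx => hx _ ⟨subset_closgordp, fun _ hy _ hz => mul_mem_closgordp hy hz,
    fun _ hy => mrg_mem_closgordp hy⟩

theorem closgordp_closgo_subset : closgordp mrg om (closgo mrg om A) ⊆ closgordp mrg om A := by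
  intro x hx
  induction hx using closgordp_induction with
  | mem _ hz =>
    obtain ⟨a, ha, b, hb, rfl⟩ := hz
    exact mul_mem_closgordp (closgp_subset_closgordp ha)
      (om_mem_closgordp (closgp_subset_closgordp hb))
  | mul _ _ _ _ hy hz => exact mul_mem_closgordp hy hz
  | merge _ _ hy => exact mrg_mem_closgordp hy
  | omega _ _ hy => exact om_mem_closgordp hy

theorem nonempty_of_mem_closgordp (hx : x ∈ closgordp mrg om A) : A.Nonempty := by
  induction hx using closgordp_induction with
  | mem x hx => exact ⟨x, hx⟩
  | mul _ _ _ _ h _ => exact h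
  | merge _ _ h => exact h
  | omega _ _ h => exact h

end Closure

section LeftTranslation

variable {M : Type*} {S : Set M} {x y : M}

theorem surjOn_mul_left_of_mul [Semigroup M] (hy : MapsTo (y * ·) S S)
    (hxy : SurjOn (x * y * ·) S S) : SurjOn (x * ·) S S :=
  SurjOn.of_comp (by rwa [comp_mul_left]) hy

theorem mul_eq_of_surjOn_of_mul_eq [Semigroup M] (hy : SurjOn (y * ·) S S) (hxy : x * y = y) :
    ∀ z ∈ S, x * z = z := by
  intro z hz
  obtain ⟨s, -, rfl⟩ := hy hz
  rw [← mul_assoc, hxy]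

variable [Monoid M]

theorem exists_pow_succ_mul_eq_of_surjOn (hfin : (Submonoid.powers x : Set M).Finite)
    (hx : SurjOn (x * ·) S S) : ∃ n : ℕ, ∀ y ∈ S, x ^ (n + 1) * y = y := by
  obtain ⟨i, j, hij, hpow⟩ :=
    hfin.exists_lt_map_eq_of_forall_mem fun n : ℕ => Submonoid.pow_mem _ (Submonoid.mem_powers x) n
  obtain ⟨n, rfl⟩ := Nat.exists_eq_add_of_lt hij
  have hsurj : SurjOn (x ^ i * ·) S S := mul_left_iterate x i ▸ hx.iterate i
  refine ⟨n, mul_eq_of_surjOn_of_mul_eq hsurj ?_⟩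
  rw [← pow_add, hpow, add_comm, add_assoc]

theorem injOn_mul_left_of_surjOn (hfin : (Submonoid.powers x : Set M).Finite)
    (hx : SurjOn (x * ·) S S) : InjOn (x * ·) S := by
  obtain ⟨n, hn⟩ := exists_pow_succ_mul_eq_of_surjOn hfin hx
  refine LeftInvOn.injOn (f₁' := (x ^ n * ·)) fun y hy => ?_
  calc
    x ^ n * (x * y) = x ^ (n + 1) * y := by rw [← mul_assoc, ← pow_succ]
    _ = y := hn y hy

theorem surjOn_mul_right_of_mul (hfin : (Submonoid.powers x : Set M).Finite)
    (hx : MapsTo (x * ·) S S) (hy : MapsTo (y * ·) S S) (hxy : SurjOn (x * y * ·) S S) :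
    SurjOn (y * ·) S S := by
  intro z hz
  obtain ⟨s, hs, hsz⟩ := hxy (hx hz)
  have hinj : InjOn (x * ·) S := injOn_mul_left_of_surjOn hfin (surjOn_mul_left_of_mul hy hxy)
  exact ⟨s, hs, hinj (hy hs) hz ((mul_assoc x y s).symm.trans hsz)⟩

end LeftTranslation

section OmegaPower

variable {M : Type*} [Monoid M] {om : M → M} {S : Set M} {b c : M}

theorem mul_om_self (hommul : ∀ x y : M, om (x * y) = x * om (y * x)) (x : M) :
    x * om x = om x := by
  simpa only [mul_one, one_mul] using (hommul x 1).symm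

theorem om_eq_om_of_mul_eq (hommul : ∀ x y : M, om (x * y) = x * om (y * x))
    (hbc : b * c = c) (hcb : c * b = b) : om b = om c :=
  calc
    om b = om (c * b) := by rw [hcb]
    _ = c * om (b * c) := hommul c b
    _ = om c := by rw [hbc, mul_om_self hommul]

theorem om_eq_om_of_surjOn (hompow : ∀ (x : M) (n : ℕ), 1 ≤ n → om (x ^ n) = om x)
    (hommul : ∀ x y : M, om (x * y) = x * om (y * x))
    (hfin : (Submonoid.powers c : Set M).Finite) (hb : b ∈ S) (hbc : b * c = c)
    (hcsurj : SurjOn (c * ·) S S) : om b = om c := by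
  obtain ⟨n, hn⟩ := exists_pow_succ_mul_eq_of_surjOn hfin hcsurj
  have hbpow : b * c ^ (n + 1) = c ^ (n + 1) := by rw [pow_succ', ← mul_assoc, hbc]
  rw [← hompow c (n + 1) n.succ_pos, om_eq_om_of_mul_eq hommul hbpow (hn b hb)]

theorem mul_eq_of_surjOn_om (hompow : ∀ (x : M) (n : ℕ), 1 ≤ n → om (x ^ n) = om x)
    (hommul : ∀ x y : M, om (x * y) = x * om (y * x))
    (hfin : (Submonoid.powers c : Set M).Finite) (hb : b ∈ S) (hob : SurjOn (om b * ·) S S)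
    (hc : c ∈ S) (hcsurj : SurjOn (c * ·) S S) : ∀ y ∈ S, c * y = y := by
  have hbc : b * c = c := mul_eq_of_surjOn_of_mul_eq hob (mul_om_self hommul b) c hc
  have hom : om b = om c := om_eq_om_of_surjOn hompow hommul hfin hb hbc hcsurj
  exact mul_eq_of_surjOn_of_mul_eq hob (hom ▸ mul_om_self hommul c)

end OmegaPower

section Dichotomy

variable {M : Type*} [Monoid M] {mrg om : M → M} {A S : Set M} {x : M}

theorem exists_surjOn_of_mem_closgordp (hmrgleft : ∀ a : M, a * mrg a = mrg a)
    (homleft : ∀ a : M, a * om a = om a) (hS : ∀ a ∈ closgordp mrg om A, MapsTo (a * ·) S S)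
    (hx : x ∈ closgordp mrg om A) (hsurj : SurjOn (x * ·) S S) :
    ∃ a ∈ A, SurjOn (a * ·) S S := by
  induction hx using closgordp_induction with
  | mem a ha => exact ⟨a, ha, hsurj⟩
  | mul _ y _ hy ih _ => exact ih (surjOn_mul_left_of_mul (hS y hy) hsurj)
  | merge y hy ih =>
    rw [← hmrgleft y] at hsurj
    exact ih (surjOn_mul_left_of_mul (hS _ (mrg_mem_closgordp hy)) hsurj)
  | omega y hy ih =>
    rw [← homleft y] at hsurj
    exact ih (surjOn_mul_left_of_mul (hS _ (om_mem_closgordp hy)) hsurj)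

theorem exists_surjOn_om (hfin : ∀ a : M, (Submonoid.powers a : Set M).Finite)
    (hmrgleft : ∀ a : M, a * mrg a = mrg a) (homleft : ∀ a : M, a * om a = om a)
    (hgen : closgordp mrg om A ⊆ closgordp mrg om (closgo mrg om A))
    (hx : x ∈ closgordp mrg om A)
    (hsurj : SurjOn (x * ·) (closgordp mrg om A) (closgordp mrg om A)) :
    ∃ b ∈ closgordp mrg om A, SurjOn (om b * ·) (closgordp mrg om A) (closgordp mrg om A) := by
  obtain ⟨_, ⟨a, ha, b, hb, rfl⟩, hab⟩ := exists_surjOn_of_mem_closgordp hmrgleft homleft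
    (fun _ hc => mapsTo_mul_left_closgordp (closgordp_closgo_subset hc)) (hgen hx) hsurj
  have hb' : b ∈ closgordp mrg om A := closgp_subset_closgordp hb
  exact ⟨b, hb', surjOn_mul_right_of_mul (hfin a)
    (mapsTo_mul_left_closgordp (closgp_subset_closgordp ha))
    (mapsTo_mul_left_closgordp (om_mem_closgordp hb')) hab⟩

theorem mul_eq_of_mem_closgordp (hmrgidem : ∀ e : M, e * e = e → mrg e = e)
    (hA : ∀ a ∈ A, ∀ y ∈ closgordp mrg om A, a * y = y)
    (hom : ∀ c ∈ closgordp mrg om A, (∀ y ∈ closgordp mrg om A, c * y = y) →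
      ∀ y ∈ closgordp mrg om A, om c * y = y)
    (hx : x ∈ closgordp mrg om A) : ∀ y ∈ closgordp mrg om A, x * y = y := by
  induction hx using closgordp_induction with
  | mem a ha => exact hA a ha
  | mul c d _ _ hc hd => exact fun y hy => by rw [mul_assoc, hd y hy, hc y hy]
  | merge c hcmem hc => rwa [hmrgidem c (hc c hcmem)]
  | omega c hcmem hc => exact hom c hcmem hc

theorem mul_eq_and_om_eq_of_surjOn_om (hfin : ∀ a : M, (Submonoid.powers a : Set M).Finite)
    (hmrgidem : ∀ e : M, e * e = e → mrg e = e)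
    (hompow : ∀ (a : M) (n : ℕ), 1 ≤ n → om (a ^ n) = om a)
    (hommul : ∀ a b : M, om (a * b) = a * om (b * a))
    (hA : ∀ a ∈ A, SurjOn (a * ·) (closgordp mrg om A) (closgordp mrg om A)) {b : M}
    (hb : b ∈ closgordp mrg om A)
    (hob : SurjOn (om b * ·) (closgordp mrg om A) (closgordp mrg om A)) :
    ∀ x ∈ closgordp mrg om A, ∀ y ∈ closgordp mrg om A, x * y = y ∧ om x = om y := by
  have hid {c : M} (hc : c ∈ closgordp mrg om A)
      (hcsurj : SurjOn (c * ·) (closgordp mrg om A) (closgordp mrg om A)) :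
      ∀ y ∈ closgordp mrg om A, c * y = y :=
    mul_eq_of_surjOn_om hompow hommul (hfin c) hb hob hc hcsurj
  have hbid : ∀ y ∈ closgordp mrg om A, b * y = y :=
    mul_eq_of_surjOn_of_mul_eq hob (mul_om_self hommul b)
  have hall : ∀ x ∈ closgordp mrg om A, ∀ y ∈ closgordp mrg om A, x * y = y := by
    refine fun x hx => mul_eq_of_mem_closgordp hmrgidem
      (fun a ha => hid (subset_closgordp ha) (hA a ha)) (fun c hc hcid => ?_) hx
    rw [om_eq_om_of_mul_eq hommul (hcid b hb) (hbid c hc)]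
    exact hid (om_mem_closgordp hb) hob
  exact fun x hx y hy =>
    ⟨hall x hx y hy, om_eq_om_of_mul_eq hommul (hall x hx y hy) (hall y hy x hx)⟩

end Dichotomy

theorem stmt3_general {M : Type*} [Monoid M]
    (hfin : ∀ a : M, (Submonoid.powers a : Set M).Finite)
    (mrg : M → M)
    (hmrgidem : ∀ e : M, e * e = e → mrg e = e)
    (hmrgleft : ∀ a : M, a * mrg a = mrg a)
    (om : M → M)
    (hompow : ∀ (a : M) (n : ℕ), 1 ≤ n → om (a ^ n) = om a)
    (hommul : ∀ a b : M, om (a * b) = a * om (b * a))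
    (A : Set M) :
    (∃ a ∈ A, (fun s => a * s) '' closgordp mrg om A ⊂ closgordp mrg om A) ∨
    closgordp mrg om (closgo mrg om A) ⊂ closgordp mrg om A ∨
    (∀ x ∈ closgordp mrg om A, ∀ y ∈ closgordp mrg om A, x * y = y ∧ om x = om y) := by
  refine or_iff_not_imp_left.2 fun hi => or_iff_not_imp_left.2 fun hii x hx => ?_
  have hA : ∀ a ∈ A, SurjOn (a * ·) (closgordp mrg om A) (closgordp mrg om A) := fun a ha =>
    of_not_not fun hsurj =>
      hi ⟨a, ha, (mapsTo_mul_left_closgordp (subset_closgordp ha)).image_subset, hsurj⟩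
  have hgen : closgordp mrg om A ⊆ closgordp mrg om (closgo mrg om A) :=
    of_not_not fun hsub => hii ⟨closgordp_closgo_subset, hsub⟩
  obtain ⟨a, ha⟩ := nonempty_of_mem_closgordp hx
  obtain ⟨b, hb, hob⟩ := exists_surjOn_om hfin hmrgleft (mul_om_self hommul) hgen
    (subset_closgordp ha) (hA a ha)
  exact mul_eq_and_om_eq_of_surjOn_om hfin hmrgidem hompow hommul hA hb hob x hx

theorem stmt3 {M : Type*} [Monoid M] [Fintype M] [PartialOrder M]
    (hmulmono : ∀ a b c d : M, a ≤ b → c ≤ d → a * c ≤ b * d)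
    (mrg : M → M)
    (hmrgmono : ∀ a b : M, a ≤ b → mrg a ≤ mrg b)
    (hmrgidem : ∀ e : M, e * e = e → mrg e = e)
    (hmrgmul : ∀ a : M, mrg a * mrg a = mrg a)
    (hmrgmrg : ∀ a : M, mrg (mrg a) = mrg a)
    (hmrgconj : ∀ a b : M, mrg (a * b) = a * mrg (b * a) * b)
    (hmrgpow : ∀ a : M, ∃ N : ℕ, ∀ m : ℕ, N ≤ m → a ^ m ≤ mrg a)
    (om : M → M)
    (homono : ∀ a b : M, a ≤ b → om a ≤ om b)
    (hom1 : om 1 = 1)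
    (hompow : ∀ x : M, ∀ n : ℕ, 1 ≤ n → om (x ^ n) = om x)
    (hommul : ∀ x y : M, om (x * y) = x * om (y * x))
    (A : Set M) :
    (∃ a ∈ A, (fun s => a * s) '' closgordp mrg om A ⊂ closgordp mrg om A) ∨
    closgordp mrg om (closgo mrg om A) ⊂ closgordp mrg om A ∨
    (∀ x ∈ closgordp mrg om A, ∀ y ∈ closgordp mrg om A, x * y = y ∧ om x = om y) := by
  have hmrgleft (a : M) : a * mrg a = mrg a := by simpa using (hmrgconj a 1).symm
  exact stmt3_general (fun a => Set.toFinite _) mrg hmrgidem hmrgleft om hompow hommul A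
end

section
/- Let M be a finite monoid equipped with a Wilke ω-power ω. If x ∈ M satisfies x R ω(x) (equivalently, since ω(x) = x·ω(x) always gives ω(x) ≤_R x, if x = ω(x)·a for some a ∈ M), then x is idempotent: x·x = x. -/
theorem mul_eq_right_of_mul_eq_right_of_dvd {S : Type*} [Semigroup S] {s y z : S}
    (hy : s * y = y) (hyz : y ∣ z) : s * z = z := by
  obtain ⟨a, rfl⟩ := hyz
  rw [← mul_assoc, hy]

theorem mul_om_self_of_om_mul {M : Type*} [Monoid M] {om : M → M}
    (hommul : ∀ x y : M, om (x * y) = x * om (y * x)) (x : M) : x * om x = om x := by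
  simpa only [mul_one, one_mul] using (hommul x 1).symm

-- In a noncommutative semigroup `y ∣ x` means `x = y * a` for some `a`, that is, `x ≤_R y`.
theorem stmt4_general {S : Type*} [Semigroup S] {om : S → S}
    (hfix : ∀ x : S, x * om x = om x) {x : S} (hx : om x ∣ x) : IsIdempotentElem x :=
  mul_eq_right_of_mul_eq_right_of_dvd (hfix x) hx

theorem stmt4 {M : Type*} [Monoid M] [Fintype M]
    (om : M → M)
    (hom1 : om 1 = 1)
    (hompow : ∀ x : M, ∀ n : ℕ, 1 ≤ n → om (x ^ n) = om x)
    (hommul : ∀ x y : M, om (x * y) = x * om (y * x))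
    (x : M)
    -- `x R ω(x)`: each is a right multiple of the other
    (hR : (∃ a : M, x = om x * a) ∧ (∃ b : M, om x = x * b)) :
    x * x = x :=
  stmt4_general (mul_om_self_of_om_mul hommul) hR.1
end

section
/- Let M be a finite monoid equipped with a Wilke ω-power ω, and let x, y ∈ M be such that x, y, ω(x) and ω(y) are all J-equivalent to one another. Then ω(x) L ω(y). -/
/-- Green's preorder `x ≤_L y`: `x = a·y` for some `a`. -/
def leL {M : Type*} [Monoid M] (x y : M) : Prop := ∃ a : M, x = a * y

/-- Green's preorder `x ≤_J y`: `x = a·y·b` for some `a, b`. -/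
def leJ {M : Type*} [Monoid M] (x y : M) : Prop := ∃ a b : M, x = a * y * b

/-- Green's equivalence `L`. -/
def eqL {M : Type*} [Monoid M] (x y : M) : Prop := leL x y ∧ leL y x

/-- Green's equivalence `J`. -/
def eqJ {M : Type*} [Monoid M] (x y : M) : Prop := leJ x y ∧ leJ y x

/-!
A finite monoid is right stable: if `x = a * x * u`, then `x = a ^ n * x * u ^ n` for all `n`, and
two powers of `u` coincide, so `x = x * u ^ k` for some `k ≥ 1`.

Since `x * ω(x) = ω(x)`, right stability turns `x ≤_J ω(x)` into `x = ω(x) * b` for some `b`, and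
then `x * x = x * ω(x) * b = ω(x) * b = x`. So `x` and `y` are `J`-equivalent idempotents, and right
stability yields a factorization `x = a * b`, `y = b * a`. Now `ω(a * b) = a * ω(b * a)` and
`ω(b * a) = b * ω(a * b)` exhibit the two sides as `L`-equivalent.
-/

/-- Green's preorder `x ≤_R y`, the mirror image of `leL`. -/
def leR {M : Type*} [Monoid M] (x y : M) : Prop := ∃ b : M, x = y * b

/-- Right stability of a monoid, one of the two halves of stability in Green's theory: it upgrades
`≤_J` to `≤_R` between an element and its right multiples. -/
def IsRightStable (M : Type*) [Monoid M] : Prop := ∀ x y : M, leJ x (x * y) → leR x (x * y)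

section Monoid

variable {M : Type*} [Monoid M]

theorem mul_eq_self_of_leR {x y z : M} (hyz : leR y z) (hxz : x * z = z) : x * y = y := by
  obtain ⟨b, rfl⟩ := hyz
  rw [← mul_assoc, hxz]

theorem eq_pow_mul_mul_pow {a x u : M} (h : x = a * x * u) (n : ℕ) : x = a ^ n * x * u ^ n := by
  induction n with
  | zero => simp
  | succ n ih =>
    calc x = a ^ n * (a * x * u) * u ^ n := by rwa [← h]
      _ = a ^ (n + 1) * x * u ^ (n + 1) := by simp only [pow_succ a, pow_succ' u, mul_assoc]

theorem eq_mul_pow_of_pow_add_eq {a x u : M} {m k : ℕ} (h : x = a * x * u)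
    (hu : u ^ (m + k) = u ^ m) : x = x * u ^ k := by
  have hm : x = a ^ m * x * u ^ m := eq_pow_mul_mul_pow h m
  calc x = a ^ m * x * u ^ (m + k) := by rwa [hu]
    _ = a ^ m * x * u ^ m * u ^ k := by rw [pow_add, mul_assoc _ (u ^ m)]
    _ = x * u ^ k := by rw [← hm]

theorem isRightStable_of_finite [Finite M] : IsRightStable M := by
  rintro x y ⟨a, b, h⟩
  let u := y * b
  have hxu : x = a * x * u := by simpa only [u, mul_assoc] using h
  obtain ⟨m, n, hmn, hu⟩ : ∃ m n : ℕ, m < n ∧ u ^ m = u ^ n :=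
    Set.finite_univ.exists_lt_map_eq_of_forall_mem fun _ => Set.mem_univ _
  obtain ⟨k, rfl⟩ := Nat.exists_eq_add_of_lt hmn
  have hxk : x = x * u ^ (k + 1) := eq_mul_pow_of_pow_add_eq hxu hu.symm
  exact ⟨b * u ^ k, by simpa only [u, pow_succ', mul_assoc] using hxk⟩

theorem IsRightStable.isIdempotentElem_of_mul_eq (hM : IsRightStable M) {x z : M}
    (hxz : x * z = z) (hJ : leJ x z) : IsIdempotentElem x := by
  have hR : leR x (x * z) := hM x z (by rwa [hxz])
  rw [hxz] at hR
  exact mul_eq_self_of_leR hR hxz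

theorem IsRightStable.exists_mul_eq_and_mul_swap_eq (hM : IsRightStable M) {e f : M}
    (he : IsIdempotentElem e) (hf : IsIdempotentElem f) (h : eqJ e f) :
    ∃ a b : M, a * b = e ∧ b * a = f := by
  obtain ⟨⟨p, q, hpq⟩, c, d, hcd⟩ := h
  let a := p * f
  let b := f * q * e
  have hab : a * b = e := by
    calc a * b = p * (f * f) * q * e := by simp only [a, b, mul_assoc]
      _ = e := by rw [hf.eq, ← hpq, he.eq]
  have hbe : b * e = b := by rw [mul_assoc, he.eq]
  have hba : b * a * (b * a) = b * a := by
    calc b * a * (b * a) = b * (a * b) * a := by simp only [mul_assoc]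
      _ = b * a := by rw [hab, hbe]
  have hfba : f * (b * a) = b * a := by
    calc f * (b * a) = f * f * q * e * a := by simp only [b, mul_assoc]
      _ = b * a := by rw [hf.eq]
  have hbaf : b * a * f = b * a := by simp only [a, mul_assoc, hf.eq]
  have hJ : leJ f (f * (b * a)) := by
    refine ⟨c * a, b * d, ?_⟩
    calc f = c * (e * e) * d := by rw [he.eq, ← hcd]
      _ = c * a * (b * a) * (b * d) := by simp only [← hab, mul_assoc]
      _ = c * a * (f * (b * a)) * (b * d) := by rw [hfba]
  have hR : leR f (b * a) := hfba ▸ hM f (b * a) hJ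
  exact ⟨a, b, hab, hbaf.symm.trans (mul_eq_self_of_leR hR hba)⟩

theorem stmt6_general (hM : IsRightStable M) {om : M → M}
    (hommul : ∀ x y : M, om (x * y) = x * om (y * x)) {x y : M}
    (hxy : eqJ x y) (hx : leJ x (om x)) (hy : leJ y (om y)) :
    eqL (om x) (om y) := by
  have habsorb : ∀ z : M, z * om z = om z := fun z => by
    simpa only [mul_one, one_mul] using (hommul z 1).symm
  have hxx : IsIdempotentElem x := hM.isIdempotentElem_of_mul_eq (habsorb x) hx
  have hyy : IsIdempotentElem y := hM.isIdempotentElem_of_mul_eq (habsorb y) hy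
  obtain ⟨a, b, rfl, rfl⟩ := hM.exists_mul_eq_and_mul_swap_eq hxx hyy hxy
  exact ⟨⟨a, hommul a b⟩, ⟨b, hommul b a⟩⟩

end Monoid

theorem stmt6 {M : Type*} [Monoid M] [Fintype M]
    (om : M → M)
    (hom1 : om 1 = 1)
    (hompow : ∀ x : M, ∀ n : ℕ, 1 ≤ n → om (x ^ n) = om x)
    (hommul : ∀ x y : M, om (x * y) = x * om (y * x))
    (x y : M)
    -- `x`, `y`, `ω(x)` and `ω(y)` are all J-equivalent to one another
    (hxy : eqJ x y) (hxox : eqJ x (om x)) (hxoy : eqJ x (om y))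
    (hyox : eqJ y (om x)) (hyoy : eqJ y (om y)) (hoxoy : eqJ (om x) (om y)) :
    eqL (om x) (om y) := by
  exact stmt6_general isRightStable_of_finite hommul hxy hxox.1 hyoy.1
end

section
/- Let M be a finite monoid equipped with a Wilke ω-power ω. Then for every x ∈ M there exists ℓ ∈ ℕ such that ω^[ℓ](x) = ω^[ℓ+1](x), where ω^[ℓ] denotes the ℓ-fold iterate of the map ω. -/
/-!
Write `b ∣ a` for `a ∈ b * M`. Since `x * ω x = ω x`, the iterates of `ω` descend in Green's
`R`-order, so under the descending chain condition some iterate `y` satisfies `ω (ω y) ∣ y`.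
Left multiplication by `ω y` fixes `ω (ω y)`, hence also its right multiple `y`, and therefore
`ω (ω y) = ω (y * ω y) = y * ω (ω y * y) = y * ω y = ω y`.
-/

section Semigroup

variable {M : Type*} [Semigroup M]

theorem mul_eq_right_of_dvd {a b c : M} (hb : a * b = b) (hbc : b ∣ c) : a * c = c := by
  obtain ⟨d, rfl⟩ := hbc
  rw [← mul_assoc, hb]

/-- The strict version `a <_R b` of Green's `R`-preorder, used to express descending chain
conditions on principal right ideals. Without adjoining an identity `∣` need not be reflexive,
but the relation is the same: `b ∣ a` and `a = b` together give `a ∣ b`. -/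
def GreenRLT (a b : M) : Prop := b ∣ a ∧ ¬ a ∣ b

namespace GreenRLT

instance : Std.Irrefl (GreenRLT (M := M)) where
  irrefl _ h := h.2 h.1

instance : IsTrans M GreenRLT where
  trans _ _ _ hab hbc := ⟨hbc.1.trans hab.1, fun hac => hab.2 (hac.trans hbc.1)⟩

theorem wellFounded_of_finite [Finite M] : WellFounded (GreenRLT (M := M)) :=
  Finite.wellFounded_of_trans_of_irrefl _

end GreenRLT

variable {f : M → M}

theorem exists_iterate_apply_apply_dvd (hwf : WellFounded (GreenRLT (M := M)))
    (hf : ∀ x, x ∣ f x) (x : M) : ∃ n : ℕ, f (f (f^[n] x)) ∣ f^[n] x := by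
  obtain ⟨_, ⟨n, rfl⟩, hmin⟩ :=
    hwf.has_min (Set.range fun n : ℕ => f^[n] x) (Set.range_nonempty _)
  have hdvd : f^[n] x ∣ f (f (f^[n] x)) := (hf _).trans (hf _)
  have hmem : f (f (f^[n] x)) ∈ Set.range fun n : ℕ => f^[n] x :=
    ⟨n + 2, by simp only [Function.iterate_succ_apply']⟩
  exact ⟨n, not_not.mp fun hnot => hmin _ hmem ⟨hdvd, hnot⟩⟩

theorem apply_apply_eq_of_dvd (hf : ∀ x, x * f x = f x)
    (hmul : ∀ x y, f (x * y) = x * f (y * x)) {y : M} (hy : f (f y) ∣ y) :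
    f (f y) = f y := by
  have hfix : f y * y = y := mul_eq_right_of_dvd (hf (f y)) hy
  calc f (f y) = f (y * f y) := by rw [hf]
    _ = y * f (f y * y) := hmul y (f y)
    _ = f y := by rw [hfix, hf]

theorem stmt7_general (hwf : WellFounded (GreenRLT (M := M))) (hf : ∀ x, x * f x = f x)
    (hmul : ∀ x y, f (x * y) = x * f (y * x)) (x : M) :
    ∃ ℓ : ℕ, f^[ℓ] x = f^[ℓ + 1] x := by
  obtain ⟨n, hn⟩ := exists_iterate_apply_apply_dvd hwf (fun x => Dvd.intro _ (hf x)) x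
  refine ⟨n + 1, ?_⟩
  simpa only [Function.iterate_succ_apply'] using (apply_apply_eq_of_dvd hf hmul hn).symm

end Semigroup

theorem stmt7 {M : Type*} [Monoid M] [Fintype M]
    (om : M → M)
    (hom1 : om 1 = 1)
    (hompow : ∀ x : M, ∀ n : ℕ, 1 ≤ n → om (x ^ n) = om x)
    (hommul : ∀ x y : M, om (x * y) = x * om (y * x)) :
    ∀ x : M, ∃ ℓ : ℕ, om^[ℓ] x = om^[ℓ + 1] x := by
  have hmul_om (x : M) : x * om x = om x := by
    simpa only [mul_one, one_mul] using (hommul x 1).symm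
  exact stmt7_general GreenRLT.wellFounded_of_finite hmul_om hommul
end

section
/- Let M be a finite monoid, let A ⊆ M, and let n ≥ 1. Then A^n·K(A) = K(A) and K(A)·A^n = K(A). -/
open Pointwise

/-! `K(A)` is the limit superior of the sequence `A ^ m`, so it does not change when the sequence
is shifted by `n`. It remains to see that `limsup` commutes with multiplication by a fixed set. If
`x ∈ S * T m` for infinitely many `m` and `x` has only finitely many factorizations (this is what
`TendstoCofinite` says about the multiplication map), then by the pigeonhole principle a single
factorization `x = a * b` has `a ∈ S` and `b ∈ T m` for infinitely many `m`. -/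

open Filter

section Limsup

variable {ι α β : Type*}

theorem image_limsup_of_tendstoCofinite (f : α → β) [TendstoCofinite f] (s : ι → Set α)
    (l : Filter ι) : f '' limsup s l = limsup (fun i ↦ f '' s i) l := by
  ext y
  have pigeonhole : (∃ᶠ i in l, ∃ x ∈ f ⁻¹' {y}, x ∈ s i) ↔
      ∃ x ∈ f ⁻¹' {y}, ∃ᶠ i in l, x ∈ s i :=
    frequently_exists_finite (TendstoCofinite.finite_preimage_singleton f y)
  simpa only [Set.mem_image, mem_limsup_iff_frequently_mem, Set.mem_preimage,
    Set.mem_singleton_iff, and_comm] using pigeonhole.symm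

theorem prod_limsup (s : Set α) (t : ι → Set β) (l : Filter ι) :
    s ×ˢ limsup t l = limsup (fun i ↦ s ×ˢ t i) l := by
  ext
  simp only [Set.mem_prod, mem_limsup_iff_frequently_mem, frequently_and_distrib_left]

theorem limsup_prod (s : ι → Set α) (t : Set β) (l : Filter ι) :
    limsup s l ×ˢ t = limsup (fun i ↦ s i ×ˢ t) l := by
  ext
  simp only [Set.mem_prod, mem_limsup_iff_frequently_mem, frequently_and_distrib_right]

variable [Mul α] [TendstoCofinite fun p : α × α ↦ p.1 * p.2]

theorem mul_limsup_of_tendstoCofinite (s : Set α) (t : ι → Set α) (l : Filter ι) :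
    s * limsup t l = limsup (fun i ↦ s * t i) l := by
  simp only [← Set.image_mul_prod, prod_limsup, image_limsup_of_tendstoCofinite]

theorem limsup_mul_of_tendstoCofinite (s : ι → Set α) (t : Set α) (l : Filter ι) :
    limsup s l * t = limsup (fun i ↦ s i * t) l := by
  simp only [← Set.image_mul_prod, limsup_prod, image_limsup_of_tendstoCofinite]

end Limsup

section Merge

variable {M : Type*} [Monoid M]

theorem mergeSet_eq_limsup (A : Set M) : mergeSet A = limsup (fun m ↦ A ^ m) atTop :=
  (atTop_basis' 1).limsup_eq_iInf_iSup.symm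

variable [TendstoCofinite fun p : M × M ↦ p.1 * p.2]

theorem pow_mul_mergeSet (A : Set M) (n : ℕ) : A ^ n * mergeSet A = mergeSet A :=
  calc
    A ^ n * mergeSet A = limsup (fun m ↦ A ^ (m + n)) atTop := by
      simp only [mergeSet_eq_limsup, mul_limsup_of_tendstoCofinite, ← pow_add, add_comm]
    _ = mergeSet A := by rw [limsup_nat_add (A ^ ·), mergeSet_eq_limsup]

theorem mergeSet_mul_pow (A : Set M) (n : ℕ) : mergeSet A * A ^ n = mergeSet A :=
  calc
    mergeSet A * A ^ n = limsup (fun m ↦ A ^ (m + n)) atTop := by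
      simp only [mergeSet_eq_limsup, limsup_mul_of_tendstoCofinite, ← pow_add]
    _ = mergeSet A := by rw [limsup_nat_add (A ^ ·), mergeSet_eq_limsup]

end Merge

theorem stmt9_general {M : Type*} [Monoid M] [TendstoCofinite fun p : M × M ↦ p.1 * p.2]
    (A : Set M) (n : ℕ) :
    A ^ n * mergeSet A = mergeSet A ∧ mergeSet A * A ^ n = mergeSet A :=
  ⟨pow_mul_mergeSet A n, mergeSet_mul_pow A n⟩

theorem stmt9 {M : Type*} [Monoid M] [Fintype M] (A : Set M) (n : ℕ) (hn : 1 ≤ n) :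
    A ^ n * mergeSet A = mergeSet A ∧ mergeSet A * A ^ n = mergeSet A :=
  stmt9_general A n
end

section
/- Let M be a finite monoid and let u : ℕ → M be any sequence. Then there exist an idempotent e ∈ M and a strictly increasing function φ : ℕ → ℕ such that for all i < j, the product u(φ(i))·u(φ(i)+1)⋯u(φ(j)−1) (over the interval of indices [φ(i), φ(j))) equals e. -/
/-!
Colour a pair `l < m` by the product of `u` over `[l, m)`. Along an ultrafilter tending to infinity,
each row of the colouring is eventually constant, and so is the sequence of these constants, say
with value `e`; choosing the terms of `φ` greedily makes every pair monochromatic of colour `e`.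
The colouring is multiplicative, so splitting `[φ 0, φ 2)` at `φ 1` gives `e = e * e`.
-/

open Filter

theorem exists_seq_forall_lt_of_eventually_eventually {α : Type*} {F : Filter α} [F.NeBot]
    {r : α → α → Prop} (h : ∀ᶠ x in F, ∀ᶠ y in F, r x y) :
    ∃ φ : ℕ → α, ∀ i j, i < j → r (φ i) (φ j) := by
  obtain ⟨φ, -, hφ⟩ := exists_seq_of_forall_finset_exists (fun x => ∀ᶠ y in F, r x y) r
    fun s hs => (h.and ((eventually_all_finset s).2 hs)).exists
  exact ⟨φ, hφ⟩

theorem exists_eventually_eq_of_ultrafilter {α β : Type*} [Finite β] (U : Ultrafilter α)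
    (f : α → β) : ∃ b, ∀ᶠ a in (U : Filter α), f a = b := by
  obtain ⟨b, hb⟩ := (U.map f).eq_pure_of_finite
  have mem_map : {b} ∈ U.map f := hb ▸ Set.mem_singleton b
  exact ⟨b, mem_map⟩

section Ramsey

variable {α : Type*} [Preorder α] [IsDirectedOrder α] [NoMaxOrder α] [Nonempty α]

theorem exists_strictMono_forall_lt_eq {β : Type*} [Finite β] (c : α → α → β) :
    ∃ b, ∃ φ : ℕ → α, StrictMono φ ∧ ∀ i j, i < j → c (φ i) (φ j) = b := by
  let U : Ultrafilter α := Ultrafilter.of atTop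
  have eventually_gt (x : α) : ∀ᶠ y in (U : Filter α), x < y :=
    Ultrafilter.of_le atTop (eventually_gt_atTop x)
  choose d hd using fun x => exists_eventually_eq_of_ultrafilter U (c x)
  obtain ⟨b, hb⟩ := exists_eventually_eq_of_ultrafilter U d
  have eventually_eq : ∀ᶠ x in (U : Filter α), ∀ᶠ y in (U : Filter α), x < y ∧ c x y = b :=
    hb.mono fun x hx => (eventually_gt x).and (hx ▸ hd x)
  obtain ⟨φ, hφ⟩ := exists_seq_forall_lt_of_eventually_eventually eventually_eq
  exact ⟨b, φ, fun i j hij => (hφ i j hij).1, fun i j hij => (hφ i j hij).2⟩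

theorem exists_isIdempotentElem_strictMono_forall_lt_eq {S : Type*} [Mul S] [Finite S]
    (c : α → α → S) (hc : ∀ x y z, x < y → y < z → c x y * c y z = c x z) :
    ∃ e, IsIdempotentElem e ∧
      ∃ φ : ℕ → α, StrictMono φ ∧ ∀ i j, i < j → c (φ i) (φ j) = e := by
  obtain ⟨e, φ, hφ, he⟩ := exists_strictMono_forall_lt_eq c
  refine ⟨e, ?_, φ, hφ, he⟩
  calc e * e = c (φ 0) (φ 1) * c (φ 1) (φ 2) := by rw [he 0 1 zero_lt_one, he 1 2 one_lt_two]
    _ = c (φ 0) (φ 2) := hc _ _ _ (hφ zero_lt_one) (hφ one_lt_two)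
    _ = e := he 0 2 two_pos

end Ramsey

theorem prod_map_Ico_mul_prod_map_Ico {M : Type*} [Monoid M] (u : ℕ → M) {l m n : ℕ}
    (hlm : l ≤ m) (hmn : m ≤ n) :
    ((List.Ico l m).map u).prod * ((List.Ico m n).map u).prod = ((List.Ico l n).map u).prod := by
  rw [← List.prod_append, ← List.map_append, List.Ico.append_consecutive hlm hmn]

theorem stmt13 {M : Type*} [Monoid M] [Fintype M] (u : ℕ → M) :
    ∃ e : M, e * e = e ∧ ∃ φ : ℕ → ℕ, StrictMono φ ∧
      ∀ i j : ℕ, i < j →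
        (((List.range' (φ i) (φ j - φ i)).map u).prod : M) = e :=
  -- `List.Ico m n` unfolds to `List.range' m (n - m)`.
  exists_isIdempotentElem_strictMono_forall_lt_eq (fun m n => ((List.Ico m n).map u).prod)
    fun _ _ _ hlm hmn => prod_map_Ico_mul_prod_map_Ico u hlm.le hmn.le
end
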